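/- Let P be a finite partially ordered set, n, m : P → ℕ, and let A (square, blocks of sizes n) and B (row blocks of sizes n, column blocks of sizes m) be real block matrices lying in the block incidence algebra I(P). Then there exists a real block matrix K (row blocks of sizes m, column blocks of sizes n) lying in I(P) such that A + B*K is Hurwitz if and only if for every i ∈ P the pair of diagonal blocks (A_ii, B_ii) is stabilizable. Moreover, when the diagonal pairs are all stabilizable, K can be chosen block diagonal (i.e. K (i,a) (j,b) = 0 whenever i ≠ j). -/

import Mathlib

/-- A block matrix, with rows indexed by `Σ i : P, Fin (n i)` and columns by
`Σ j : P, Fin (m j)`, lies in the block incidence algebra of the poset `P` if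
the block `M_{ij}` vanishes whenever `¬ (j ≤ i)`. -/
def BlockIncidence {P : Type*} [PartialOrder P] {R : Type*} [Zero R] {n m : P → ℕ}
    (M : Matrix (Σ i : P, Fin (n i)) (Σ j : P, Fin (m j)) R) : Prop :=
  ∀ (i : P) (a : Fin (n i)) (j : P) (b : Fin (m j)), ¬ (j ≤ i) → M ⟨i, a⟩ ⟨j, b⟩ = 0

/-- The `(i,i)` diagonal block of a block matrix. -/
def diagBlock {P : Type*} {R : Type*} {n m : P → ℕ}
    (M : Matrix (Σ i : P, Fin (n i)) (Σ j : P, Fin (m j)) R) (i : P) :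
    Matrix (Fin (n i)) (Fin (m i)) R :=
  Matrix.of fun a b => M ⟨i, a⟩ ⟨i, b⟩

/-- A real square matrix is Hurwitz if every complex eigenvalue has negative real part. -/
def IsHurwitz {k : Type*} [Fintype k] [DecidableEq k] (M : Matrix k k ℝ) : Prop :=
  ∀ z ∈ spectrum ℂ (M.map (algebraMap ℝ ℂ)), z.re < 0

/-- A pair `(A, B)` is stabilizable if some state feedback `K` makes `A + B K` Hurwitz. -/
def IsStabilizable {n m : ℕ} (A : Matrix (Fin n) (Fin n) ℝ)
    (B : Matrix (Fin n) (Fin m) ℝ) : Prop :=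
  ∃ K : Matrix (Fin m) (Fin n) ℝ, IsHurwitz (A + B * K)

/-!
Along a linear extension of `P`, every matrix of the block incidence algebra is block triangular.
Its determinant is therefore the product of those of its diagonal blocks, and its spectrum the
union of theirs. Since diagonal blocks of products in the algebra are the products of the diagonal
blocks, `A + B * K` is Hurwitz iff all `A_ii + B_ii * K_ii` are, and the `K_ii` are independent
of each other.
-/

section DiagBlock

variable {P R : Type*} {n m : P → ℕ}

theorem diagBlock_add [Add R] (M N : Matrix (Σ i : P, Fin (n i)) (Σ j : P, Fin (m j)) R) (i : P) :
    diagBlock (M + N) i = diagBlock M i + diagBlock N i :=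
  rfl

theorem diagBlock_sub [Sub R] (M N : Matrix (Σ i : P, Fin (n i)) (Σ j : P, Fin (m j)) R) (i : P) :
    diagBlock (M - N) i = diagBlock M i - diagBlock N i :=
  rfl

theorem diagBlock_map {S : Type*} (M : Matrix (Σ i : P, Fin (n i)) (Σ j : P, Fin (m j)) R)
    (f : R → S) (i : P) : diagBlock (M.map f) i = (diagBlock M i).map f :=
  rfl

theorem diagBlock_blockDiagonal' [DecidableEq P] [Zero R]
    (D : ∀ i, Matrix (Fin (n i)) (Fin (m i)) R) (i : P) :
    diagBlock (Matrix.blockDiagonal' D) i = D i :=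
  congrFun (Matrix.blockDiag'_blockDiagonal' D) i

theorem diagBlock_algebraMap [Fintype P] [DecidableEq P] {S : Type*} [CommSemiring S] [Semiring R]
    [Algebra S R] (r : S) (i : P) :
    diagBlock (algebraMap S (Matrix (Σ i : P, Fin (n i)) (Σ i : P, Fin (n i)) R) r) i =
      algebraMap S (Matrix (Fin (n i)) (Fin (n i)) R) r :=
  Matrix.blockDiag'_diagonal (m' := fun i => Fin (n i)) (fun _ => algebraMap S R r) i

end DiagBlock

section

variable {P : Type*} [PartialOrder P] [DecidableEq P] {R : Type*} {n m : P → ℕ}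

theorem blockIncidence_blockDiagonal' [Zero R] (D : ∀ i, Matrix (Fin (n i)) (Fin (m i)) R) :
    BlockIncidence (Matrix.blockDiagonal' D) :=
  fun _ a _ b hji => Matrix.blockDiagonal'_apply_ne D a b fun hij => hji hij.ge

theorem blockIncidence_algebraMap [Fintype P] {S : Type*} [CommSemiring S] [Semiring R]
    [Algebra S R] (r : S) :
    BlockIncidence (algebraMap S (Matrix (Σ i : P, Fin (n i)) (Σ i : P, Fin (n i)) R) r) :=
  fun _ _ _ _ hji => Matrix.diagonal_apply_ne _ fun hij => hji (congrArg Sigma.fst hij).ge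

end

theorem toLinearExtension_injective {P : Type*} [PartialOrder P] :
    Function.Injective (toLinearExtension : P → LinearExtension P) :=
  Function.injective_id

theorem det_eq_prod_det_blockDiag'_of_blockTriangular {ι α R : Type*} {k : ι → Type*} [Fintype ι]
    [DecidableEq ι] [∀ i, Fintype (k i)] [∀ i, DecidableEq (k i)] [LinearOrder α] [CommRing R]
    {M : Matrix (Σ i, k i) (Σ i, k i) R} {b : ι → α} (hb : Function.Injective b)
    (hM : M.BlockTriangular fun x => b x.1) :
    M.det = ∏ i, (M.blockDiag' i).det := by
  let fiberEquiv (i : ι) : {x : Σ i, k i // b x.1 = b i} ≃ k i :=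
    (Equiv.subtypeEquivRight fun _ => hb.eq_iff).trans (Equiv.sigmaSubtype i)
  have det_toSquareBlock (i : ι) :
      (M.toSquareBlock (fun x => b x.1) (b i)).det = (M.blockDiag' i).det :=
    (Matrix.det_submatrix_equiv_self (fiberEquiv i).symm _).symm
  have image_fst_subset : Finset.univ.image (fun x : Σ i, k i => b x.1) ⊆ Finset.univ.image b := by
    simp only [Finset.subset_iff, Finset.mem_image, Finset.mem_univ, true_and]
    rintro _ ⟨x, rfl⟩
    exact ⟨x.1, rfl⟩
  -- Empty blocks make the two images differ; their determinants are `1`.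
  rw [hM.det, Finset.prod_subset image_fst_subset, Finset.prod_image hb.injOn,
    Finset.prod_congr rfl fun i _ => det_toSquareBlock i]
  intro a _ ha
  have : IsEmpty {x : Σ i, k i // b x.1 = a} :=
    ⟨fun x => ha (Finset.mem_image.2 ⟨x.1, Finset.mem_univ _, x.2⟩)⟩
  exact Matrix.det_isEmpty

namespace BlockIncidence

variable {P : Type*} [PartialOrder P] {R : Type*} {n m l : P → ℕ}

protected theorem map [Zero R] {S : Type*} [Zero S]
    {M : Matrix (Σ i : P, Fin (n i)) (Σ j : P, Fin (m j)) R} (hM : BlockIncidence M)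
    {f : R → S} (hf : f 0 = 0) : BlockIncidence (M.map f) :=
  fun i a j b hji => by rw [Matrix.map_apply, hM i a j b hji, hf]

protected theorem add [AddZeroClass R] {M N : Matrix (Σ i : P, Fin (n i)) (Σ j : P, Fin (m j)) R}
    (hM : BlockIncidence M) (hN : BlockIncidence N) : BlockIncidence (M + N) :=
  fun i a j b hji => by rw [Matrix.add_apply, hM i a j b hji, hN i a j b hji, add_zero]

protected theorem sub [SubNegZeroMonoid R]
    {M N : Matrix (Σ i : P, Fin (n i)) (Σ j : P, Fin (m j)) R}
    (hM : BlockIncidence M) (hN : BlockIncidence N) : BlockIncidence (M - N) :=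
  fun i a j b hji => by rw [Matrix.sub_apply, hM i a j b hji, hN i a j b hji, sub_zero]

section Mul

variable {M : Matrix (Σ i : P, Fin (n i)) (Σ j : P, Fin (m j)) R}
  {N : Matrix (Σ i : P, Fin (m i)) (Σ j : P, Fin (l j)) R}

theorem apply_mul_apply_eq_zero [MulZeroClass R] (hM : BlockIncidence M) (hN : BlockIncidence N)
    {i j k : P} (hk : ¬ (j ≤ k ∧ k ≤ i)) (a : Fin (n i)) (c : Fin (m k)) (b : Fin (l j)) :
    M ⟨i, a⟩ ⟨k, c⟩ * N ⟨k, c⟩ ⟨j, b⟩ = 0 := by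
  by_cases hki : k ≤ i
  · rw [hN k c j b fun hjk => hk ⟨hjk, hki⟩, mul_zero]
  · rw [hM i a k c hki, zero_mul]

protected theorem mul [Fintype P] [NonUnitalNonAssocSemiring R] (hM : BlockIncidence M)
    (hN : BlockIncidence N) : BlockIncidence (M * N) := by
  intro i a j b hji
  rw [Matrix.mul_apply]
  exact Finset.sum_eq_zero fun x _ =>
    hM.apply_mul_apply_eq_zero hN (fun h => hji (h.1.trans h.2)) a x.2 b

theorem diagBlock_mul [Fintype P] [NonUnitalNonAssocSemiring R] (hM : BlockIncidence M)
    (hN : BlockIncidence N) (i : P) :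
    diagBlock (M * N) i = diagBlock M i * diagBlock N i := by
  ext a b
  simp only [diagBlock, Matrix.of_apply, Matrix.mul_apply, Fintype.sum_sigma]
  exact Fintype.sum_eq_single i fun k hki => Finset.sum_eq_zero fun c _ =>
    hM.apply_mul_apply_eq_zero hN (fun h => hki (h.2.antisymm h.1)) a c b

end Mul

theorem blockTriangular_toLinearExtension [Zero R]
    {M : Matrix (Σ i : P, Fin (n i)) (Σ j : P, Fin (n j)) R} (hM : BlockIncidence M) :
    M.BlockTriangular fun x => toLinearExtension (OrderDual.toDual x.1) :=
  fun x y hyx => hM x.1 x.2 y.1 y.2 fun hle =>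
    hyx.not_ge (toLinearExtension.monotone (OrderDual.toDual_le_toDual.2 hle))

section Spectrum

variable [Fintype P] [DecidableEq P] [CommRing R]
  {M : Matrix (Σ i : P, Fin (n i)) (Σ j : P, Fin (n j)) R}

theorem det_eq_prod_det_diagBlock (hM : BlockIncidence M) :
    M.det = ∏ i, (diagBlock M i).det :=
  det_eq_prod_det_blockDiag'_of_blockTriangular
    (toLinearExtension_injective.comp OrderDual.toDual.injective)
    hM.blockTriangular_toLinearExtension

theorem isUnit_iff_forall_isUnit_diagBlock (hM : BlockIncidence M) :
    IsUnit M ↔ ∀ i, IsUnit (diagBlock M i) := by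
  simp only [Matrix.isUnit_iff_isUnit_det, hM.det_eq_prod_det_diagBlock, IsUnit.prod_univ_iff]

theorem spectrum_eq_iUnion_spectrum_diagBlock (S : Type*) [CommSemiring S] [Algebra S R]
    (hM : BlockIncidence M) : spectrum S M = ⋃ i, spectrum S (diagBlock M i) := by
  ext r
  simp only [spectrum.mem_iff, Set.mem_iUnion, ← not_forall,
    ((blockIncidence_algebraMap r).sub hM).isUnit_iff_forall_isUnit_diagBlock,
    diagBlock_sub, diagBlock_algebraMap]

end Spectrum

section Hurwitz

variable [Fintype P] [DecidableEq P]

theorem isHurwitz_iff_forall_isHurwitz_diagBlock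
    {M : Matrix (Σ i : P, Fin (n i)) (Σ j : P, Fin (n j)) ℝ} (hM : BlockIncidence M) :
    IsHurwitz M ↔ ∀ i, IsHurwitz (diagBlock M i) := by
  simp only [IsHurwitz,
    (hM.map (map_zero (algebraMap ℝ ℂ))).spectrum_eq_iUnion_spectrum_diagBlock ℂ,
    diagBlock_map, Set.mem_iUnion, forall_exists_index]
  exact forall_comm

theorem isHurwitz_add_mul_iff {A : Matrix (Σ i : P, Fin (n i)) (Σ j : P, Fin (n j)) ℝ}
    {B : Matrix (Σ i : P, Fin (n i)) (Σ j : P, Fin (m j)) ℝ}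
    {K : Matrix (Σ i : P, Fin (m i)) (Σ j : P, Fin (n j)) ℝ}
    (hA : BlockIncidence A) (hB : BlockIncidence B) (hK : BlockIncidence K) :
    IsHurwitz (A + B * K) ↔
      ∀ i, IsHurwitz (diagBlock A i + diagBlock B i * diagBlock K i) := by
  simp only [(hA.add (hB.mul hK)).isHurwitz_iff_forall_isHurwitz_diagBlock, diagBlock_add,
    hB.diagBlock_mul hK]

theorem isHurwitz_add_mul_blockDiagonal'_iff
    {A : Matrix (Σ i : P, Fin (n i)) (Σ j : P, Fin (n j)) ℝ}
    {B : Matrix (Σ i : P, Fin (n i)) (Σ j : P, Fin (m j)) ℝ}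
    (hA : BlockIncidence A) (hB : BlockIncidence B) (D : ∀ i, Matrix (Fin (m i)) (Fin (n i)) ℝ) :
    IsHurwitz (A + B * Matrix.blockDiagonal' D) ↔
      ∀ i, IsHurwitz (diagBlock A i + diagBlock B i * D i) := by
  simp only [hA.isHurwitz_add_mul_iff hB (blockIncidence_blockDiagonal' D),
    diagBlock_blockDiagonal']

end Hurwitz

end BlockIncidence

/-- A poset-causal pair `(A, B)` admits a static poset-causal stabilizing feedback iff all
the diagonal sub-pairs `(A_ii, B_ii)` are stabilizable; moreover in that case the feedback
can be chosen block diagonal. -/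
theorem blockIncidence_static_stabilizable_iff
    {P : Type*} [PartialOrder P] [Fintype P] [DecidableEq P]
    (n m : P → ℕ)
    (A : Matrix (Σ i : P, Fin (n i)) (Σ j : P, Fin (n j)) ℝ)
    (B : Matrix (Σ i : P, Fin (n i)) (Σ j : P, Fin (m j)) ℝ)
    (hA : BlockIncidence A) (hB : BlockIncidence B) :
    ((∃ K : Matrix (Σ i : P, Fin (m i)) (Σ j : P, Fin (n j)) ℝ,
        BlockIncidence K ∧ IsHurwitz (A + B * K)) ↔
      ∀ i : P, IsStabilizable (diagBlock A i) (diagBlock B i)) ∧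
    ((∀ i : P, IsStabilizable (diagBlock A i) (diagBlock B i)) →
      ∃ K : Matrix (Σ i : P, Fin (m i)) (Σ j : P, Fin (n j)) ℝ,
        (∀ (i : P) (a : Fin (m i)) (j : P) (b : Fin (n j)), i ≠ j → K ⟨i, a⟩ ⟨j, b⟩ = 0) ∧
        IsHurwitz (A + B * K)) := by
  have exists_blockDiagonal' (hAB : ∀ i, IsStabilizable (diagBlock A i) (diagBlock B i)) :
      ∃ D : ∀ i, Matrix (Fin (m i)) (Fin (n i)) ℝ,
        IsHurwitz (A + B * Matrix.blockDiagonal' D) := by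
    choose D hD using hAB
    exact ⟨D, (hA.isHurwitz_add_mul_blockDiagonal'_iff hB D).2 hD⟩
  refine ⟨⟨?_, fun hAB => ?_⟩, fun hAB => ?_⟩
  · rintro ⟨K, hK, hABK⟩ i
    exact ⟨diagBlock K i, (hA.isHurwitz_add_mul_iff hB hK).1 hABK i⟩
  · obtain ⟨D, hD⟩ := exists_blockDiagonal' hAB
    exact ⟨Matrix.blockDiagonal' D, blockIncidence_blockDiagonal' D, hD⟩
  · obtain ⟨D, hD⟩ := exists_blockDiagonal' hAB
    exact ⟨Matrix.blockDiagonal' D, fun _ a _ b => Matrix.blockDiagonal'_apply_ne D a b, hD⟩
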